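/- arXiv:2503.19205 — 5 statements merged into one kernel-verified Lean document; each statement's English description precedes it below -/
import Mathlib

section
/- Let b : ℕ → ℝ be a sequence, let ε > 0, and let α : ℝ → ℝ be strictly increasing with α(0) = 0 and α(s) ≤ s for all s ≥ 0. If b(0) > 0 and b(t+1) − b(t) + α(b(t)) ≥ ε for every t ∈ ℕ, then b(t) > 0 for every t ∈ ℕ, and moreover b(t) ≥ ε for every t ≥ 1. -/
/-- Strict one-order DCBF invariance (Remark 1): enforcing the discrete-time barrier
inequality with a positive margin `ε` keeps the barrier value strictly positive for
all times, and bounded below by `ε` from step 1 onwards. -/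
theorem dcbf_strict_invariance (b : ℕ → ℝ) (ε : ℝ) (hε : 0 < ε) (α : ℝ → ℝ)
    (hα_mono : StrictMono α) (hα_zero : α 0 = 0)
    (hα_le : ∀ s : ℝ, 0 ≤ s → α s ≤ s)
    (hb0 : 0 < b 0)
    (hrec : ∀ t : ℕ, b (t + 1) - b t + α (b t) ≥ ε) :
    (∀ t : ℕ, 0 < b t) ∧ (∀ t : ℕ, 1 ≤ t → ε ≤ b t) := by
  -- Where `b t ≥ 0`, the bound `α (b t) ≤ b t` turns the barrier inequality into `b (t + 1) ≥ ε`.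
  have step : ∀ t, 0 < b t → ε ≤ b (t + 1) := fun t ht => by
    linarith [hrec t, hα_le (b t) ht.le]
  have pos : ∀ t, 0 < b t := fun t => by
    induction t with
    | zero => exact hb0
    | succ k ih => exact hε.trans_le (step k ih)
  refine ⟨pos, fun t ht => ?_⟩
  obtain ⟨k, rfl⟩ := Nat.exists_eq_add_of_le' ht
  exact step k (pos k)
end

section
/- Let m ≥ 1 and let ψ_0 : ℕ → ℝ be a sequence. For i = 1, …, m let α_i : ℝ → ℝ be strictly increasing with α_i(0) = 0 and α_i(s) ≤ s for all s ≥ 0, and define recursively ψ_i(t) = ψ_{i−1}(t+1) − ψ_{i−1}(t) + α_i(ψ_{i−1}(t)) for all t ∈ ℕ. If ψ_i(0) ≥ 0 for every i ∈ {0, …, m−1} and ψ_m(t) ≥ 0 for every t ∈ ℕ, then ψ_i(t) ≥ 0 for every i ∈ {0, …, m−1} and every t ∈ ℕ; in particular ψ_0(t) ≥ 0 for all t. -/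
/-- Safety guarantee for discrete-time high-order CBFs (Theorem 1), stated along a
fixed trajectory: `ψ 0 t = h (x t)`, and `ψ (i+1)` is obtained from `ψ i` via the
DCBF recursion with class-κ functions `α (i+1)` bounded above by the identity on the
nonnegative reals. If `ψ i 0 ≥ 0` for all `i < m` and the highest-order constraint
`ψ m t ≥ 0` holds for all `t`, then `ψ i t ≥ 0` for all `i < m` and all `t`;
in particular `ψ 0 t ≥ 0` for all `t`. -/
theorem dhocbf_safety (m : ℕ) (hm : 1 ≤ m) (ψ : ℕ → ℕ → ℝ) (α : ℕ → ℝ → ℝ)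
    (hα_mono : ∀ i : ℕ, 1 ≤ i → i ≤ m → StrictMono (α i))
    (hα_zero : ∀ i : ℕ, 1 ≤ i → i ≤ m → α i 0 = 0)
    (hα_le : ∀ i : ℕ, 1 ≤ i → i ≤ m → ∀ s : ℝ, 0 ≤ s → α i s ≤ s)
    (hrec : ∀ i : ℕ, i < m → ∀ t : ℕ,
      ψ (i + 1) t = ψ i (t + 1) - ψ i t + α (i + 1) (ψ i t))
    (hinit : ∀ i : ℕ, i < m → 0 ≤ ψ i 0)
    (htop : ∀ t : ℕ, 0 ≤ ψ m t) :
    (∀ i : ℕ, i < m → ∀ t : ℕ, 0 ≤ ψ i t) ∧ (∀ t : ℕ, 0 ≤ ψ 0 t) := by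
  -- Downward induction on the order `i`, starting from `i = m`.
  have key : ∀ i : ℕ, i ≤ m → ∀ t : ℕ, 0 ≤ ψ i t := by
    intro i hi
    induction hi using Nat.decreasingInduction with
    | self => exact htop
    | of_succ k hk ih =>
      intro t
      induction t with
      | zero => exact hinit k hk
      | succ t iht =>
        -- `ψ k (t + 1) = ψ (k + 1) t + (ψ k t - α (k + 1) (ψ k t))`, a sum of nonnegative terms.
        have hle := hα_le (k + 1) (by omega) hk (ψ k t) iht
        linarith [hrec k hk t, ih t]
  exact ⟨fun i hi => key i hi.le, key 0 (Nat.zero_le m)⟩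
end

section
/- Let J ≥ 1, ε > 0, and let φ_0 : ℕ → ℝ be a sequence. For j = 1, …, J let α_j : ℝ → ℝ be strictly increasing with α_j(0) = 0 and α_j(s) ≤ s for all s ≥ 0, and define recursively φ_j(t) = φ_{j−1}(t+1) − φ_{j−1}(t) + α_j(φ_{j−1}(t)) for all t ∈ ℕ. If φ_j(0) > 0 for every j ∈ {0, …, J−1} and φ_J(t) ≥ ε for every t ∈ ℕ, then φ_j(t) > 0 for every j ∈ {0, …, J−1} and every t ∈ ℕ. -/
/-- Multi-order strict invariance (Remark 1): if `φ j 0 > 0` for all `j < J` and the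
highest-order constraint `φ J t ≥ ε` holds with margin `ε > 0` for all `t`, where
`φ (j+1)` is obtained from `φ j` via the DCBF recursion with class-κ functions
bounded above by the identity on the nonnegative reals, then `φ j t > 0` for all
`j < J` and all `t`. -/
theorem dhocbf_strict_invariance (J : ℕ) (hJ : 1 ≤ J) (ε : ℝ) (hε : 0 < ε)
    (φ : ℕ → ℕ → ℝ) (α : ℕ → ℝ → ℝ)
    (hα_mono : ∀ j : ℕ, 1 ≤ j → j ≤ J → StrictMono (α j))
    (hα_zero : ∀ j : ℕ, 1 ≤ j → j ≤ J → α j 0 = 0)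
    (hα_le : ∀ j : ℕ, 1 ≤ j → j ≤ J → ∀ s : ℝ, 0 ≤ s → α j s ≤ s)
    (hrec : ∀ j : ℕ, j < J → ∀ t : ℕ,
      φ (j + 1) t = φ j (t + 1) - φ j t + α (j + 1) (φ j t))
    (hinit : ∀ j : ℕ, j < J → 0 < φ j 0)
    (htop : ∀ t : ℕ, ε ≤ φ J t) :
    ∀ j : ℕ, j < J → ∀ t : ℕ, 0 < φ j t := by
  -- Induct on `t` for all orders `j` at once: as `α (j + 1) s ≤ s`, the recursion gives
  -- `φ j (t + 1) ≥ φ (j + 1) t`. For `j + 1 = J` the right side is at least `ε`.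
  intro j hj t
  induction t generalizing j with
  | zero => exact hinit j hj
  | succ t ih =>
    have hle := hα_le (j + 1) (by omega) (by omega) (φ j t) (ih j hj).le
    have hr := hrec j hj t
    have hpos : 0 < φ (j + 1) t := by
      rcases Nat.lt_or_ge (j + 1) J with h | h
      · exact ih (j + 1) h
      · obtain rfl : j + 1 = J := by omega
        exact hε.trans_le (htop t)
    linarith
end

section
/- Let m ≥ 1 and let h : ℕ → ℝ be a sequence. For i = 1, …, m let a_i : ℕ → ℝ be sequences with a_i(t) > 0 for all t, and for i = 1, …, m−1 let α_i : ℝ → ℝ be strictly increasing with α_i(0) = 0 and α_i(s) ≤ s for all s ≥ 0. Define ψ_0(t) = a_1(t) · h(t) and, for i = 1, …, m−1, ψ_i(t) = a_{i+1}(t) · ( ψ_{i−1}(t+1) − ψ_{i−1}(t) + α_i(ψ_{i−1}(t)) ). If ψ_i(0) ≥ 0 for every i ∈ {0, …, m−1} and ψ_{m−1}(t) ≥ 0 for every t ∈ ℕ, then ψ_i(t) ≥ 0 for every i ∈ {0, …, m−1} and every t ∈ ℕ, and moreover h(t) ≥ 0 for every t ∈ ℕ. -/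
/-!
Downward induction on `i`, starting from `ψ (m - 1) ≥ 0`. If `ψ (i + 1) ≥ 0` at all times, dividing
by the positive factor `a (i + 2) t` gives
`ψ i (t + 1) ≥ ψ i t - α (i + 1) (ψ i t)`, and the right side is nonnegative whenever `ψ i t` is,
because `α (i + 1) s ≤ s` for `s ≥ 0`; so `ψ i ≥ 0` by induction on `t` from `ψ i 0 ≥ 0`.
Finally `h t ≥ 0` since `ψ 0 t = a 1 t * h t` with `a 1 t > 0`.
-/

/-- Safety guarantee for Discrete-time Auxiliary-Variable adaptive CBFs
(DAVCBFs, Theorem 2), stated along a fixed trajectory: with strictly positive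
auxiliary variables `a i`, `ψ 0 t = a 1 t * h t` and
`ψ i t = a (i+1) t * (ψ (i-1) (t+1) - ψ (i-1) t + α i (ψ (i-1) t))` for
`i = 1, …, m-1`, where each `α i` is a class-κ function bounded above by the
identity on the nonnegative reals. If `ψ i 0 ≥ 0` for all `i < m` and
`ψ (m-1) t ≥ 0` for all `t`, then `ψ i t ≥ 0` for all `i < m` and `t`, and
`h t ≥ 0` for all `t`. -/
theorem davcbf_safety (m : ℕ) (hm : 1 ≤ m) (h : ℕ → ℝ) (ψ : ℕ → ℕ → ℝ)
    (a : ℕ → ℕ → ℝ) (α : ℕ → ℝ → ℝ)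
    (ha_pos : ∀ i : ℕ, 1 ≤ i → i ≤ m → ∀ t : ℕ, 0 < a i t)
    (hα_mono : ∀ i : ℕ, 1 ≤ i → i ≤ m - 1 → StrictMono (α i))
    (hα_zero : ∀ i : ℕ, 1 ≤ i → i ≤ m - 1 → α i 0 = 0)
    (hα_le : ∀ i : ℕ, 1 ≤ i → i ≤ m - 1 → ∀ s : ℝ, 0 ≤ s → α i s ≤ s)
    (hψ0 : ∀ t : ℕ, ψ 0 t = a 1 t * h t)
    (hrec : ∀ i : ℕ, 1 ≤ i → i ≤ m - 1 → ∀ t : ℕ,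
      ψ i t = a (i + 1) t * (ψ (i - 1) (t + 1) - ψ (i - 1) t + α i (ψ (i - 1) t)))
    (hinit : ∀ i : ℕ, i < m → 0 ≤ ψ i 0)
    (htop : ∀ t : ℕ, 0 ≤ ψ (m - 1) t) :
    (∀ i : ℕ, i < m → ∀ t : ℕ, 0 ≤ ψ i t) ∧ (∀ t : ℕ, 0 ≤ h t) := by
  have key : ∀ i : ℕ, i < m → ∀ t : ℕ, 0 ≤ ψ i t := by
    intro i hi
    have hi' : i ≤ m - 1 := by omega
    clear hi
    induction hi' using Nat.decreasingInduction with
    | self => exact htop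
    | of_succ k hk ih =>
      intro t
      induction t with
      | zero => exact hinit k (by omega)
      | succ t iht =>
        have h1 := hrec (k + 1) (by omega) (by omega) t
        have h2 := ih t
        rw [h1, Nat.add_sub_cancel] at h2
        have h3 := nonneg_of_mul_nonneg_right h2 (ha_pos (k + 1 + 1) (by omega) (by omega) t)
        have h4 := hα_le (k + 1) (by omega) (by omega) _ iht
        linarith
  refine ⟨key, fun t => ?_⟩
  have h0 := key 0 (by omega) t
  rw [hψ0] at h0
  exact nonneg_of_mul_nonneg_right h0 (ha_pos 1 le_rfl hm t)
end

section
/- Let Ω be a type and let ρ : (Ω → ℝ) → ℝ be monotone (if X(ω) ≤ Y(ω) for all ω then ρ(X) ≤ ρ(Y)), superadditive (ρ(X + Y) ≥ ρ(X) + ρ(Y)), positively homogeneous (ρ(c · X) = c · ρ(X) for every real c ≥ 0), and normalized (ρ(0) = 0). Let m ≥ 1, let h : ℕ → (Ω → ℝ), for i = 1, …, m let a_i : ℕ → ℝ satisfy a_i(t) > 0 for all t, and for i = 1, …, m−1 let α_i : ℝ → ℝ satisfy α_i(s) ≤ s for all s ∈ ℝ. Define ψ_0(t)(ω) = a_1(t)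 · h(t)(ω) and, for i = 1, …, m−1, ψ_i(t)(ω) = a_{i+1}(t) · ( ψ_{i−1}(t+1)(ω) − ψ_{i−1}(t)(ω) + α_i(ψ_{i−1}(t)(ω)) ). If ρ(ψ_i(0)) ≥ 0 for every i ∈ {0, …, m−1} and ρ(ψ_{m−1}(t)) ≥ 0 for every t ∈ ℕ, then ρ(ψ_i(t)) ≥ 0 for every i ∈ {0, …, m−1} and every t ∈ ℕ, and moreover ρ(h(t)) ≥ 0 for every t ∈ ℕ. -/
/-!
Since `α i s ≤ s`, the recursion gives the pointwise bound `ψ i t ≤ a (i + 1) t * ψ (i - 1) (t + 1)`.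
Monotonicity and positive homogeneity turn this into
`ρ (ψ i t) ≤ a (i + 1) t * ρ (ψ (i - 1) (t + 1))`, so nonnegativity at level `i` for all times passes
to level `i - 1` for all times `≥ 1`, and time `0` is the initial condition. Descending induction
from level `m - 1` reaches `ψ 0 = a 1 * h`, and dividing by `a 1 t > 0` gives the claim for `h`.
-/

/-- Risk-sensitive safety guarantee for Risk-aware Adaptive CBFs (RACBFs, Theorem 3),
stated along a fixed stochastic trajectory: `ρ` is a monotone, superadditive,
positively homogeneous, normalized acceptability functional (coherent risk measure in
the gain orientation), `h t : Ω → ℝ` is the random barrier value, `a i t` are strictly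
positive deterministic auxiliary variables, and `ψ i` are the random DAVCBFs. If
`ρ (ψ i 0) ≥ 0` for all `i < m` and `ρ (ψ (m-1) t) ≥ 0` for all `t`, then
`ρ (ψ i t) ≥ 0` for all `i < m` and `t`, and `ρ (h t) ≥ 0` for all `t`. -/
theorem racbf_safety {Ω : Type*} (ρ : (Ω → ℝ) → ℝ)
    (hmono : ∀ X Y : Ω → ℝ, (∀ ω, X ω ≤ Y ω) → ρ X ≤ ρ Y)
    (hsuper : ∀ X Y : Ω → ℝ, ρ X + ρ Y ≤ ρ (X + Y))
    (hhomog : ∀ c : ℝ, 0 ≤ c → ∀ X : Ω → ℝ, ρ (fun ω => c * X ω) = c * ρ X)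
    (hnorm : ρ (fun _ => 0) = 0)
    (m : ℕ) (hm : 1 ≤ m) (h : ℕ → Ω → ℝ) (ψ : ℕ → ℕ → Ω → ℝ)
    (a : ℕ → ℕ → ℝ) (α : ℕ → ℝ → ℝ)
    (ha_pos : ∀ i : ℕ, 1 ≤ i → i ≤ m → ∀ t : ℕ, 0 < a i t)
    (hα_le : ∀ i : ℕ, 1 ≤ i → i ≤ m - 1 → ∀ s : ℝ, α i s ≤ s)
    (hψ0 : ∀ t : ℕ, ∀ ω : Ω, ψ 0 t ω = a 1 t * h t ω)
    (hrec : ∀ i : ℕ, 1 ≤ i → i ≤ m - 1 → ∀ t : ℕ, ∀ ω : Ω,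
      ψ i t ω = a (i + 1) t *
        (ψ (i - 1) (t + 1) ω - ψ (i - 1) t ω + α i (ψ (i - 1) t ω)))
    (hinit : ∀ i : ℕ, i < m → 0 ≤ ρ (ψ i 0))
    (htop : ∀ t : ℕ, 0 ≤ ρ (ψ (m - 1) t)) :
    (∀ i : ℕ, i < m → ∀ t : ℕ, 0 ≤ ρ (ψ i t)) ∧ (∀ t : ℕ, 0 ≤ ρ (h t)) := by
  have key : ∀ k i : ℕ, i + k + 1 = m → ∀ t : ℕ, 0 ≤ ρ (ψ i t) := by
    intro k
    induction k with
    | zero =>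
      intro i hi t
      have hi' : i = m - 1 := by omega
      rw [hi']
      exact htop t
    | succ k ih =>
      intro i hi t
      cases t with
      | zero => exact hinit i (by omega)
      | succ t =>
        have hpos := ha_pos (i + 1 + 1) (by omega) (by omega) t
        -- `α (i + 1) ≤ id` cancels the term `- ψ i t`.
        have hle : ρ (ψ (i + 1) t) ≤ ρ (fun ω => a (i + 1 + 1) t * ψ i (t + 1) ω) := by
          apply hmono
          intro ω
          rw [hrec (i + 1) (by omega) (by omega) t ω, Nat.add_sub_cancel]
          have hα := hα_le (i + 1) (by omega) (by omega) (ψ i t ω)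
          exact mul_le_mul_of_nonneg_left (by linarith) hpos.le
        rw [hhomog _ hpos.le] at hle
        exact nonneg_of_mul_nonneg_right ((ih (i + 1) (by omega) t).trans hle) hpos
  refine ⟨fun i hi => key (m - 1 - i) i (by omega), fun t => ?_⟩
  have hpos := ha_pos 1 le_rfl hm t
  have h0 := key (m - 1) 0 (by omega) t
  rw [show ψ 0 t = fun ω => a 1 t * h t ω from funext (hψ0 t), hhomog _ hpos.le] at h0
  exact nonneg_of_mul_nonneg_right h0 hpos
end
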